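/- arXiv:1002.3797 — 9 statements merged into one kernel-verified Lean document; each statement's English description precedes it below -/
import Mathlib

section
/- Let p ≥ 2 and let ℙ ⊆ 𝕃(2,3,p) be the persistent subset ℤx₃ ∪ (x₂ + ℤx₃). For every integer n, the element n·ω belongs to ℙ if and only if n ≡ 0 or n ≡ 2 modulo 6. (Thus along each ω-orbit the membership in ℙ follows the 6-periodic pattern + − + − − −.) -/
/-- The relations subgroup of `ℤ³` defining `𝕃(2,3,p)`: generated by
`(2,-3,0)` and `(0,3,-p)`. -/
def Lrel (p : ℕ) : AddSubgroup (ℤ × ℤ × ℤ) :=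
  AddSubgroup.closure {(2, -3, 0), (0, 3, -(p : ℤ))}

/-- The abelian group `𝕃(2,3,p)` with generators `x₁, x₂, x₃` and relations
`2x₁ = 3x₂ = p x₃`. -/
abbrev Lgrp (p : ℕ) := (ℤ × ℤ × ℤ) ⧸ Lrel p

/-- The generator `x₁` of `𝕃(2,3,p)`. -/
def lx1 (p : ℕ) : Lgrp p := QuotientAddGroup.mk (1, 0, 0)

/-- The generator `x₂` of `𝕃(2,3,p)`. -/
def lx2 (p : ℕ) : Lgrp p := QuotientAddGroup.mk (0, 1, 0)

/-- The generator `x₃` of `𝕃(2,3,p)`. -/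
def lx3 (p : ℕ) : Lgrp p := QuotientAddGroup.mk (0, 0, 1)

/-- The canonical element `c = p x₃`. -/
def lc (p : ℕ) : Lgrp p := (p : ℤ) • lx3 p

/-- The dualizing element `ω = c - x₁ - x₂ - x₃`. -/
def lw (p : ℕ) : Lgrp p := lc p - lx1 p - lx2 p - lx3 p

/-- The persistent subset `ℙ = ℤx₃ ∪ (x₂ + ℤx₃)` of `𝕃(2,3,p)`. -/
def Lpersistent (p : ℕ) : Set (Lgrp p) :=
  {y | ∃ m : ℤ, y = m • lx3 p ∨ y = lx2 p + m • lx3 p}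

theorem Lrel_mem_aux (p : ℕ) (x y z : ℤ) :
    (x, y, z) ∈ Lrel p ↔ ∃ a b : ℤ, a * 2 = x ∧ -(a * 3) + b * 3 = y ∧ -(b * p) = z := by
  unfold Lrel
  rw [AddSubgroup.mem_closure_pair]
  simp [Prod.ext_iff]

theorem lw_smul_aux (p : ℕ) (n : ℤ) :
    n • lw p = QuotientAddGroup.mk (-n, -n, n * p - n) := by
  have h : lw p = QuotientAddGroup.mk
      ((p : ℤ) • ((0, 0, 1) : ℤ × ℤ × ℤ) - (1, 0, 0) - (0, 1, 0) - (0, 0, 1)) := rfl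
  rw [h, ← QuotientAddGroup.mk_zsmul]
  congr 1
  simp [mul_sub]

theorem stmt_2 (p : ℕ) (hp : 2 ≤ p) (n : ℤ) :
    n • lw p ∈ Lpersistent p ↔ n % 6 = 0 ∨ n % 6 = 2 := by
  have h1 : ∀ m : ℤ, n • lw p = m • lx3 p ↔
      ∃ a b : ℤ, a * 2 = n ∧ -(a * 3) + b * 3 = n ∧ -(b * p) = n - n * p + m := by
    intro m
    have h : m • lx3 p = QuotientAddGroup.mk (0, 0, m) := by
      unfold lx3
      rw [← QuotientAddGroup.mk_zsmul]
      congr 1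
      simp
    rw [h, lw_smul_aux, QuotientAddGroup.eq, ← Lrel_mem_aux]
    simp
  have h2 : ∀ m : ℤ, n • lw p = lx2 p + m • lx3 p ↔
      ∃ a b : ℤ, a * 2 = n ∧ -(a * 3) + b * 3 = n + 1 ∧ -(b * p) = n - n * p + m := by
    intro m
    have h : lx2 p + m • lx3 p = QuotientAddGroup.mk (0, 1, m) := by
      unfold lx2 lx3
      rw [← QuotientAddGroup.mk_zsmul, ← QuotientAddGroup.mk_add]
      congr 1
      simp
    rw [h, lw_smul_aux, QuotientAddGroup.eq, ← Lrel_mem_aux]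
    simp
  simp only [Lpersistent, Set.mem_setOf_eq, h1, h2]
  constructor
  · rintro ⟨m, ⟨a, b, h, h', -⟩ | ⟨a, b, h, h', -⟩⟩ <;> omega
  · rintro (h | h)
    · exact ⟨-((5 * (n / 6)) * p) - n + n * p, Or.inl ⟨3 * (n / 6), 5 * (n / 6), by omega, by omega, by ring⟩⟩
    · exact ⟨-((5 * (n / 6) + 2) * p) - n + n * p,
        Or.inr ⟨3 * (n / 6) + 1, 5 * (n / 6) + 2, by omega, by omega, by ring⟩⟩
end

section
/- Let p ≥ 2. In 𝕃 = 𝕃(2,3,p), for an integer n ≥ 1 one has n·ω ∈ ℤx₁ if and only if lcm(3,p) divides n; equivalently, the class of ω in the quotient group 𝕃/ℤx₁ has order exactly lcm(3,p). -/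
theorem key_aux (p : ℕ) (n : ℤ) :
    n • lw p ∈ AddSubgroup.zmultiples (lx1 p) ↔ (Nat.lcm 3 p : ℤ) ∣ n := by
  have h1 : n • lw p = QuotientAddGroup.mk (s := Lrel p) (-n, -n, n * (p - 1)) := by
    have : lw p = QuotientAddGroup.mk (s := Lrel p)
      ((p : ℤ) • (0, 0, 1) - (1, 0, 0) - (0, 1, 0) - (0, 0, 1)) := rfl
    rw [this, ← QuotientAddGroup.mk_zsmul]
    congr 1
    simp
  have h2 : ∀ k : ℤ, k • lx1 p = QuotientAddGroup.mk (s := Lrel p) (k, 0, 0) := by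
    intro k
    rw [lx1, ← QuotientAddGroup.mk_zsmul]
    congr 1
    simp
  have h3 : (Nat.lcm 3 p : ℤ) ∣ n ↔ (3 : ℤ) ∣ n ∧ (p : ℤ) ∣ n := by
    simp only [Int.natCast_dvd, Nat.lcm_dvd_iff]
    rw [← Int.natCast_dvd, Nat.cast_ofNat]
  rw [AddSubgroup.mem_zmultiples_iff, h3, h1]
  have h4 : ∀ z, z ∈ Lrel p ↔ ∃ a b : ℤ,
      a • ((2, -3, 0) : ℤ × ℤ × ℤ) + b • ((0, 3, -(p : ℤ)) : ℤ × ℤ × ℤ) = z := by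
    intro z
    rw [Lrel, AddSubgroup.mem_closure_pair]
  simp only [h2, QuotientAddGroup.eq, h4]
  simp only [Prod.smul_mk, smul_eq_mul, Prod.mk_add_mk, Prod.neg_mk, Prod.mk.injEq]
  constructor
  · rintro ⟨k, a, b, e1, e2, e3⟩
    exact ⟨⟨a - b, by linarith⟩, ⟨n + b, by linarith⟩⟩
  · rintro ⟨⟨u, hu⟩, ⟨v, hv⟩⟩
    refine ⟨-n - 2 * (v - n + u), v - n + u, v - n, by ring, by linarith, by linarith⟩

/-- For `n ≥ 1` one has `n·ω ∈ ℤx₁` iff `lcm(3,p) ∣ n`; equivalently the class of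
`ω` in `𝕃(2,3,p)/ℤx₁` has (additive) order exactly `lcm(3,p)`. -/
theorem stmt_3 (p : ℕ) (hp : 2 ≤ p) :
    (∀ n : ℤ, 1 ≤ n →
      (n • lw p ∈ AddSubgroup.zmultiples (lx1 p) ↔ (Nat.lcm 3 p : ℤ) ∣ n)) ∧
    addOrderOf
      ((QuotientAddGroup.mk (lw p)) : Lgrp p ⧸ AddSubgroup.zmultiples (lx1 p)) =
        Nat.lcm 3 p := by
  refine ⟨fun n _ => key_aux p n, ?_⟩
  have h : ∀ n : ℕ, addOrderOf
      ((QuotientAddGroup.mk (lw p)) : Lgrp p ⧸ AddSubgroup.zmultiples (lx1 p)) ∣ n ↔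
        Nat.lcm 3 p ∣ n := by
    intro n
    rw [← Int.natCast_dvd_natCast, addOrderOf_dvd_iff_zsmul_eq_zero,
      ← QuotientAddGroup.mk_zsmul, QuotientAddGroup.eq_zero_iff, key_aux,
      Int.natCast_dvd_natCast]
  exact Nat.dvd_antisymm ((h _).2 dvd_rfl) ((h _).1 dvd_rfl)
end

section
/- Let p ≥ 2. In 𝕃 = 𝕃(2,3,p) the equality lcm(3,p)·ω = ((p−6)/gcd(3,p))·x₁ holds; note that gcd(3,p) divides p−6, so the coefficient (p−6)/gcd(3,p) is an integer, equal to lcm(3,p)·(p−6)/(3p). -/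
/-- In `𝕃(2,3,p)` the equality `lcm(3,p)·ω = ((p−6)/gcd(3,p))·x₁` holds; moreover
`gcd(3,p)` divides `p−6`, so the coefficient is an integer, equal to
`lcm(3,p)·(p−6)/(3p)`. -/
theorem stmt_4 (p : ℕ) (hp : 2 ≤ p) :
    ((Nat.gcd 3 p : ℤ) ∣ (p : ℤ) - 6) ∧
    (Nat.lcm 3 p : ℤ) • lw p = (((p : ℤ) - 6) / (Nat.gcd 3 p : ℤ)) • lx1 p ∧
    ((p : ℤ) - 6) / (Nat.gcd 3 p : ℤ) =
      (Nat.lcm 3 p : ℤ) * ((p : ℤ) - 6) / (3 * (p : ℤ)) := by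
  obtain ⟨a, ha⟩ := Nat.gcd_dvd_left 3 p
  obtain ⟨b, hb⟩ := Nat.gcd_dvd_right 3 p
  have hl : Nat.gcd 3 p * Nat.lcm 3 p = 3 * p := Nat.gcd_mul_lcm 3 p
  have hg : 0 < Nat.gcd 3 p := Nat.gcd_pos_of_pos_left _ (by norm_num)
  generalize Nat.gcd 3 p = g at *
  generalize Nat.lcm 3 p = l at *
  have hg' : (g : ℤ) ≠ 0 := by positivity
  have hp' : (p : ℤ) ≠ 0 := by positivity
  have ha' : (3 : ℤ) = g * a := by exact_mod_cast ha
  have hb' : (p : ℤ) = g * b := by exact_mod_cast hb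
  have hl' : (g : ℤ) * l = 3 * p := by exact_mod_cast hl
  have hl1 : (l : ℤ) = b * 3 := by
    apply mul_left_cancel₀ hg'
    rw [hl', hb']; ring
  have hl2 : (l : ℤ) = a * p := by
    apply mul_left_cancel₀ hg'
    rw [hl', ha']; ring
  have h6 : (p : ℤ) - 6 = g * (b - 2 * a) := by linear_combination hb' - 2 * ha'
  have hq : ((p : ℤ) - 6) / (g : ℤ) = b - 2 * a := by
    rw [h6, Int.mul_ediv_cancel_left _ hg']
  have r1 : (2 : ℤ) • lx1 p = (3 : ℤ) • lx2 p := by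
    unfold lx1 lx2
    rw [← QuotientAddGroup.mk_zsmul, ← QuotientAddGroup.mk_zsmul, eq_comm, QuotientAddGroup.eq]
    apply AddSubgroup.subset_closure
    simp
  have r2 : (3 : ℤ) • lx2 p = (p : ℤ) • lx3 p := by
    unfold lx3 lx2
    rw [← QuotientAddGroup.mk_zsmul, ← QuotientAddGroup.mk_zsmul, eq_comm, QuotientAddGroup.eq]
    apply AddSubgroup.subset_closure
    simp
  refine ⟨⟨_, h6⟩, ?_, ?_⟩
  · rw [hq]
    have e2 : (l : ℤ) • lx2 p = (b * 2 : ℤ) • lx1 p := by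
      rw [hl1, mul_smul, ← r1, mul_smul]
    have e3 : (l : ℤ) • lx3 p = (a * 2 : ℤ) • lx1 p := by
      rw [hl2, mul_smul, ← r2, ← r1, mul_smul]
    have ec : lc p = (2 : ℤ) • lx1 p := by
      unfold lc; rw [← r2, ← r1]
    unfold lw
    have key : ∀ {A : Type} [AddCommGroup A] (x y z w : A), w = (2 : ℤ) • x →
        (l : ℤ) • y = (b * 2 : ℤ) • x → (l : ℤ) • z = (a * 2 : ℤ) • x →
        (l : ℤ) • (w - x - y - z) = (b - 2 * a : ℤ) • x := by
      intro A _ x y z w hw hy hz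
      rw [smul_sub, smul_sub, smul_sub, hw, hy, hz, hl1]
      module
    exact key _ _ _ _ ec e2 e3
  · rw [hq, h6, eq_comm]
    apply Int.ediv_eq_of_eq_mul_right (by positivity)
    linear_combination ((b : ℤ) - 2 * a) * hl'
end

section
/- Let p₁, p₂, p₃ ≥ 2. Every element x of the group 𝕃 = 𝕃(p₁,p₂,p₃) can be written in normal form x = n₁x₁ + n₂x₂ + n₃x₃ + mc with integers n₁, n₂, n₃, m satisfying 0 ≤ nᵢ < pᵢ for i = 1,2,3, and this representation is unique. -/
/-- The relations subgroup of `ℤ³` defining `𝕃(p₁,p₂,p₃)`: generated by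
`(p₁,−p₂,0)` and `(0,p₂,−p₃)`. -/
def Lrel3 (p₁ p₂ p₃ : ℕ) : AddSubgroup (ℤ × ℤ × ℤ) :=
  AddSubgroup.closure {((p₁ : ℤ), -(p₂ : ℤ), 0), (0, (p₂ : ℤ), -(p₃ : ℤ))}

/-- The abelian group `𝕃(p₁,p₂,p₃)` with generators `x₁, x₂, x₃` and relations
`p₁x₁ = p₂x₂ = p₃x₃`. -/
abbrev Lgrp3 (p₁ p₂ p₃ : ℕ) := (ℤ × ℤ × ℤ) ⧸ Lrel3 p₁ p₂ p₃

/-- The generator `x₁` of `𝕃(p₁,p₂,p₃)`. -/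
def ly1 (p₁ p₂ p₃ : ℕ) : Lgrp3 p₁ p₂ p₃ := QuotientAddGroup.mk (1, 0, 0)

/-- The generator `x₂` of `𝕃(p₁,p₂,p₃)`. -/
def ly2 (p₁ p₂ p₃ : ℕ) : Lgrp3 p₁ p₂ p₃ := QuotientAddGroup.mk (0, 1, 0)

/-- The generator `x₃` of `𝕃(p₁,p₂,p₃)`. -/
def ly3 (p₁ p₂ p₃ : ℕ) : Lgrp3 p₁ p₂ p₃ := QuotientAddGroup.mk (0, 0, 1)

/-- The canonical element `c = p₃ x₃` of `𝕃(p₁,p₂,p₃)`. -/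
def lcc (p₁ p₂ p₃ : ℕ) : Lgrp3 p₁ p₂ p₃ := (p₃ : ℤ) • ly3 p₁ p₂ p₃

theorem aux_mem (p₁ p₂ p₃ : ℕ) (a b d : ℤ) : (a, b, d) ∈ Lrel3 p₁ p₂ p₃ ↔
    ∃ u v : ℤ, a = u * p₁ ∧ b = (v - u) * p₂ ∧ d = -v * p₃ := by
  unfold Lrel3
  rw [AddSubgroup.mem_closure_pair]
  constructor
  · rintro ⟨u, v, h⟩
    simp only [Prod.smul_mk, Prod.mk_add_mk, Prod.mk.injEq, smul_eq_mul] at h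
    obtain ⟨h1, h2, h3⟩ := h
    exact ⟨u, v, by linarith, by linarith, by linarith⟩
  · rintro ⟨u, v, h1, h2, h3⟩
    refine ⟨u, v, ?_⟩
    simp only [Prod.smul_mk, Prod.mk_add_mk, Prod.mk.injEq, smul_eq_mul]
    exact ⟨by linarith, by linarith, by linarith⟩

theorem aux_mk (p₁ p₂ p₃ : ℕ) (n₁ n₂ n₃ m : ℤ) :
    n₁ • ly1 p₁ p₂ p₃ + n₂ • ly2 p₁ p₂ p₃ + n₃ • ly3 p₁ p₂ p₃ + m • lcc p₁ p₂ p₃ =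
      QuotientAddGroup.mk (n₁, n₂, n₃ + m * p₃) := by
  unfold lcc ly1 ly2 ly3
  simp only [← QuotientAddGroup.mk_zsmul, ← QuotientAddGroup.mk_add]
  simp

theorem aux_zero (p u n n' : ℤ) (h0 : 0 ≤ n) (h1 : n < p) (h0' : 0 ≤ n') (h1' : n' < p)
    (h : -n + n' = u * p) : u = 0 := by
  have hp : 0 < p := by omega
  have a : u < 1 := by
    by_contra hc
    have : 1 * p ≤ u * p := mul_le_mul_of_nonneg_right (by omega) hp.le
    omega
  have b : -1 < u := by
    by_contra hc
    have : u * p ≤ (-1) * p := mul_le_mul_of_nonneg_right (by omega) hp.le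
    omega
  omega

/-- Every element `x` of `𝕃(p₁,p₂,p₃)` has a unique normal form
`x = n₁x₁ + n₂x₂ + n₃x₃ + mc` with `0 ≤ nᵢ < pᵢ`. -/
theorem stmt_7 (p₁ p₂ p₃ : ℕ) (h₁ : 2 ≤ p₁) (h₂ : 2 ≤ p₂) (h₃ : 2 ≤ p₃)
    (x : Lgrp3 p₁ p₂ p₃) :
    ∃! t : ℤ × ℤ × ℤ × ℤ,
      (0 ≤ t.1 ∧ t.1 < (p₁ : ℤ)) ∧
      (0 ≤ t.2.1 ∧ t.2.1 < (p₂ : ℤ)) ∧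
      (0 ≤ t.2.2.1 ∧ t.2.2.1 < (p₃ : ℤ)) ∧
      x = t.1 • ly1 p₁ p₂ p₃ + t.2.1 • ly2 p₁ p₂ p₃ + t.2.2.1 • ly3 p₁ p₂ p₃ +
            t.2.2.2 • lcc p₁ p₂ p₃ := by
  obtain ⟨⟨a, b, d⟩, rfl⟩ := QuotientAddGroup.mk_surjective x
  have q₁ : (0 : ℤ) < p₁ := by omega
  have q₂ : (0 : ℤ) < p₂ := by omega
  have q₃ : (0 : ℤ) < p₃ := by omega
  apply existsUnique_of_exists_of_unique
  · refine ⟨(a % p₁, b % p₂, d % p₃, d / p₃ + a / p₁ + b / p₂),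
      ⟨Int.emod_nonneg _ q₁.ne', Int.emod_lt_of_pos _ q₁⟩,
      ⟨Int.emod_nonneg _ q₂.ne', Int.emod_lt_of_pos _ q₂⟩,
      ⟨Int.emod_nonneg _ q₃.ne', Int.emod_lt_of_pos _ q₃⟩, ?_⟩
    rw [aux_mk, QuotientAddGroup.eq]
    simp only [Prod.neg_mk, Prod.mk_add_mk]
    rw [aux_mem]
    refine ⟨-(a / p₁), -(a / p₁) - b / p₂, ?_, ?_, ?_⟩
    · linarith [Int.emod_add_mul_ediv a p₁]
    · linarith [Int.emod_add_mul_ediv b p₂]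
    · linarith [Int.emod_add_mul_ediv d p₃]
  · rintro ⟨n₁, n₂, n₃, m⟩ ⟨k₁, k₂, k₃, l⟩ ⟨⟨a1, a2⟩, ⟨a3, a4⟩, ⟨a5, a6⟩, e⟩
      ⟨⟨b1, b2⟩, ⟨b3, b4⟩, ⟨b5, b6⟩, f⟩
    rw [e, aux_mk, aux_mk, QuotientAddGroup.eq] at f
    simp only [Prod.neg_mk, Prod.mk_add_mk] at *
    rw [aux_mem] at f
    obtain ⟨u, v, f1, f2, f3⟩ := f
    have hu := aux_zero _ _ _ _ a1 a2 b1 b2 f1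
    have hv := aux_zero _ _ _ _ a3 a4 b3 b4 f2
    have hv0 : v = 0 := by omega
    subst hu hv0
    have hm := aux_zero p₃ (m - l) _ _ a5 a6 b5 b6 (by linarith)
    have hml : m = l := by omega
    subst hml
    simp only [Prod.mk.injEq]
    refine ⟨by linarith, by linarith, by linarith, trivial⟩
end

section
/- Let p ≥ 3 and let δ : 𝕃(2,3,p) → ℤ be the degree homomorphism. Every coset of ℤx₃ in 𝕃 contains exactly one element x with 0 ≤ δ(x) < δ(x₃); consequently the set {x ∈ 𝕃 : 0 ≤ δ(x) < δ(x₃)} has exactly 6 elements. -/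
/-- The projection of `ℤ³` to `ℤ/2 × ℤ/3`. -/
def phi0 : (ℤ × ℤ × ℤ) →+ (ZMod 2 × ZMod 3) where
  toFun v := ((v.1 : ZMod 2), (v.2.1 : ZMod 3))
  map_zero' := by simp
  map_add' := by intro a b; simp

lemma phi0_rel (p : ℕ) : Lrel p ≤ phi0.ker := by
  unfold Lrel
  rw [AddSubgroup.closure_le]
  rintro v (rfl | rfl)
  · show phi0 _ = 0
    simp only [phi0, AddMonoidHom.coe_mk, ZeroHom.coe_mk]
    decide
  · show phi0 _ = 0
    simp only [phi0, AddMonoidHom.coe_mk, ZeroHom.coe_mk]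
    decide

/-- The induced map on `𝕃(2,3,p)`. -/
def phi (p : ℕ) : Lgrp p →+ (ZMod 2 × ZMod 3) :=
  QuotientAddGroup.lift (Lrel p) phi0 (phi0_rel p)

lemma phi_mk (p : ℕ) (a b c : ℤ) :
    phi p (QuotientAddGroup.mk (a, b, c)) = ((a : ZMod 2), (b : ZMod 3)) := rfl

lemma phi_x3 (p : ℕ) : phi p (lx3 p) = 0 := by
  rw [lx3, phi_mk]; simp

lemma phi_ker (p : ℕ) (x : Lgrp p) (h : phi p x = 0) :
    x ∈ AddSubgroup.zmultiples (lx3 p) := by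
  induction x using QuotientAddGroup.induction_on with
  | H v =>
    obtain ⟨a, b, c⟩ := v
    rw [phi_mk, Prod.mk_eq_zero] at h
    obtain ⟨ha, hb⟩ := h
    rw [ZMod.intCast_zmod_eq_zero_iff_dvd] at ha hb
    obtain ⟨k, hk⟩ := ha
    obtain ⟨l, hl⟩ := hb
    push_cast at hk hl
    refine AddSubgroup.mem_zmultiples_iff.2 ⟨c + (k + l) * p, ?_⟩
    rw [lx3, ← QuotientAddGroup.mk_zsmul, QuotientAddGroup.eq]
    have e1 : ((2, -3, 0) : ℤ × ℤ × ℤ) ∈ Lrel p := AddSubgroup.subset_closure (by simp)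
    have e2 : ((0, 3, -(p : ℤ)) : ℤ × ℤ × ℤ) ∈ Lrel p := AddSubgroup.subset_closure (by simp)
    have e := add_mem (zsmul_mem e1 k) (zsmul_mem e2 (k + l))
    convert e using 1
    ext <;> simp [hk, hl] <;> ring

lemma phi_surj (p : ℕ) : Function.Surjective (phi p) := by
  rintro ⟨u, v⟩
  obtain ⟨a, rfl⟩ := ZMod.intCast_surjective u
  obtain ⟨b, rfl⟩ := ZMod.intCast_surjective v
  exact ⟨QuotientAddGroup.mk (a, b, 0), phi_mk p a b 0⟩

/-- For `p ≥ 3`, every coset of `ℤx₃` in `𝕃(2,3,p)` contains exactly one element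
`x` with `0 ≤ δ(x) < δ(x₃)`; consequently `{x : 0 ≤ δ(x) < δ(x₃)}` has exactly
`6` elements. -/
theorem stmt_10 (p : ℕ) (hp : 3 ≤ p) (δ : Lgrp p →+ ℤ)
    (h1 : δ (lx1 p) = (Nat.lcm 6 p / 2 : ℕ))
    (h2 : δ (lx2 p) = (Nat.lcm 6 p / 3 : ℕ))
    (h3 : δ (lx3 p) = (Nat.lcm 6 p / p : ℕ)) :
    (∀ y : Lgrp p, ∃! x : Lgrp p,
      x - y ∈ AddSubgroup.zmultiples (lx3 p) ∧ 0 ≤ δ x ∧ δ x < δ (lx3 p)) ∧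
    {x : Lgrp p | 0 ≤ δ x ∧ δ x < δ (lx3 p)}.ncard = 6 := by
  have hd : 0 < δ (lx3 p) := by
    rw [h3]
    have : 0 < Nat.lcm 6 p / p :=
      Nat.div_pos (Nat.le_of_dvd (Nat.lcm_pos (by norm_num) (by omega)) (Nat.dvd_lcm_right 6 p))
        (by omega)
    exact_mod_cast this
  have hex : ∀ y : Lgrp p, ∃ x : Lgrp p,
      x - y ∈ AddSubgroup.zmultiples (lx3 p) ∧ 0 ≤ δ x ∧ δ x < δ (lx3 p) := by
    intro y
    have e : δ (y - (δ y / δ (lx3 p)) • lx3 p) = δ y % δ (lx3 p) := by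
      rw [map_sub, map_zsmul, smul_eq_mul, Int.emod_def, mul_comm]
    refine ⟨y - (δ y / δ (lx3 p)) • lx3 p, ?_, ?_, ?_⟩
    · exact AddSubgroup.mem_zmultiples_iff.2 ⟨-(δ y / δ (lx3 p)), by rw [neg_smul]; abel⟩
    · rw [e]; exact Int.emod_nonneg _ hd.ne'
    · rw [e]; exact Int.emod_lt_of_pos _ hd
  have huniq : ∀ x z : Lgrp p, x - z ∈ AddSubgroup.zmultiples (lx3 p) →
      0 ≤ δ x → δ x < δ (lx3 p) → 0 ≤ δ z → δ z < δ (lx3 p) → x = z := by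
    intro x z h a b c d
    obtain ⟨m, hm⟩ := AddSubgroup.mem_zmultiples_iff.1 h
    have e := congrArg δ hm
    rw [map_zsmul, map_sub, smul_eq_mul] at e
    have m1 : m < 1 := by by_contra hh; nlinarith
    have m2 : -1 < m := by by_contra hh; nlinarith
    have m0 : m = 0 := by omega
    rw [m0, zero_smul] at hm
    exact sub_eq_zero.1 hm.symm
  refine ⟨fun y => ?_, ?_⟩
  · obtain ⟨x, hx, hx0, hx1⟩ := hex y
    refine ⟨x, ⟨hx, hx0, hx1⟩, ?_⟩
    rintro z ⟨hz, hz0, hz1⟩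
    refine huniq z x ?_ hz0 hz1 hx0 hx1
    have := sub_mem hz hx
    rwa [sub_sub_sub_cancel_right] at this
  · rw [← Nat.card_coe_set_eq]
    have hb : Function.Bijective
        (fun x : {x : Lgrp p | 0 ≤ δ x ∧ δ x < δ (lx3 p)} => phi p x.1) := by
      constructor
      · rintro ⟨x, hx0, hx1⟩ ⟨z, hz0, hz1⟩ h
        apply Subtype.ext
        refine huniq x z (phi_ker p _ ?_) hx0 hx1 hz0 hz1
        rw [map_sub]
        exact sub_eq_zero.2 h
      · intro u
        obtain ⟨y, rfl⟩ := phi_surj p u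
        obtain ⟨x, hx, hx0, hx1⟩ := hex y
        refine ⟨⟨x, hx0, hx1⟩, ?_⟩
        obtain ⟨m, hm⟩ := AddSubgroup.mem_zmultiples_iff.1 hx
        have e := congrArg (phi p) hm
        rw [map_zsmul, phi_x3, smul_zero, map_sub] at e
        exact sub_eq_zero.1 e.symm
    rw [Nat.card_eq_of_bijective _ hb, Nat.card_prod, Nat.card_zmod, Nat.card_zmod]
end

section
/- Let p ≥ 2. Every y ∈ 𝕃(2,3,p) with 0 ≤ y ≤ x₂ + (p−1)x₃ (i.e., both y and x₂ + (p−1)x₃ − y lie in the positive cone) is of the form y = a·x₂ + b·x₃ with a ∈ {0,1} and b ∈ {0,1,…,p−1}; in particular every such y belongs to ℙ = ℤx₃ ∪ (x₂ + ℤx₃). -/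
theorem Lrel_mem_form (p : ℕ) (v : ℤ × ℤ × ℤ) (hv : v ∈ Lrel p) :
    ∃ m n : ℤ, v.1 = 2 * m ∧ v.2.1 = -3 * m + 3 * n ∧ v.2.2 = -(p * n) := by
  unfold Lrel at hv
  rw [AddSubgroup.mem_closure_pair] at hv
  obtain ⟨m, n, rfl⟩ := hv
  refine ⟨m, n, ?_, ?_, ?_⟩ <;> simp <;> ring

/-- Every `y ∈ 𝕃(2,3,p)` with `0 ≤ y ≤ x₂ + (p−1)x₃` (both `y` and
`x₂ + (p−1)x₃ − y` lie in the positive cone) has the form `y = a·x₂ + b·x₃`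
with `a ∈ {0,1}` and `0 ≤ b ≤ p−1`; in particular every such `y` belongs to
`ℙ = ℤx₃ ∪ (x₂ + ℤx₃)`. -/
theorem stmt_14 (p : ℕ) (hp : 2 ≤ p) (y : Lgrp p)
    (hy : ∃ a₁ a₂ a₃ : ℕ, y = a₁ • lx1 p + a₂ • lx2 p + a₃ • lx3 p)
    (hy' : ∃ a₁ a₂ a₃ : ℕ,
      lx2 p + (p - 1) • lx3 p - y = a₁ • lx1 p + a₂ • lx2 p + a₃ • lx3 p) :
    (∃ a b : ℕ, (a = 0 ∨ a = 1) ∧ b ≤ p - 1 ∧ y = a • lx2 p + b • lx3 p) ∧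
    y ∈ Lpersistent p := by
  obtain ⟨a1, a2, a3, rfl⟩ := hy
  obtain ⟨b1, b2, b3, h⟩ := hy'
  have h2 : ((((a1 + b1 : ℤ), (a2 + b2 - 1 : ℤ), (a3 + b3 - (p - 1 : ℕ) : ℤ)) : ℤ × ℤ × ℤ) : Lgrp p)
      = 0 := by
    have e : ((((a1 + b1 : ℤ), (a2 + b2 - 1 : ℤ), (a3 + b3 - (p - 1 : ℕ) : ℤ)) : ℤ × ℤ × ℤ) : Lgrp p)
      = (a1 • lx1 p + a2 • lx2 p + a3 • lx3 p) + (b1 • lx1 p + b2 • lx2 p + b3 • lx3 p)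
        - (lx2 p + (p - 1) • lx3 p) := by
      simp only [lx1, lx2, lx3, ← QuotientAddGroup.mk_nsmul, ← QuotientAddGroup.mk_add,
        ← QuotientAddGroup.mk_sub]
      congr 1
      ext <;> simp
    rw [e, ← h]
    abel
  rw [QuotientAddGroup.eq_zero_iff] at h2
  obtain ⟨m, n, e1, e2, e3⟩ := Lrel_mem_form p _ h2
  simp only at e1 e2 e3
  have hn : n ≤ 0 := by
    by_contra hn
    have : (p : ℤ) * 1 ≤ p * n := by gcongr; omega
    omega
  have hm : m = 0 := by omega
  have hn0 : n = 0 := by omega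
  subst hm hn0
  have ha1 : a1 = 0 := by omega
  have ha2 : a2 = 0 ∨ a2 = 1 := by omega
  have ha3 : a3 ≤ p - 1 := by simp at e3; omega
  subst ha1
  refine ⟨⟨a2, a3, ha2, ha3, by simp⟩, (a3 : ℤ), ?_⟩
  rcases ha2 with rfl | rfl
  · left; simp
  · right; simp
end

section
/- Let p ≥ 2 and let ℙ = ℤx₃ ∪ (x₂ + ℤx₃) ⊆ 𝕃(2,3,p). For every integer n, at least one of the four elements nω + ω, nω − x₁, nω − x₂, nω − x₃ of 𝕃 belongs to ℙ. -/
theorem aux_h1 (p : ℕ) : (2:ℤ) • lx1 p = (p:ℤ) • lx3 p := by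
  have h : ((2:ℤ), (0:ℤ), -(p:ℤ)) ∈ Lrel p := by
    have := (Lrel p).add_mem
      (AddSubgroup.subset_closure (Set.mem_insert _ _))
      (AddSubgroup.subset_closure (Set.mem_insert_of_mem _ (Set.mem_singleton _)))
    simpa using this
  rw [lx1, lx3, ← QuotientAddGroup.mk_zsmul, ← QuotientAddGroup.mk_zsmul]
  refine (QuotientAddGroup.eq.2 ?_)
  have := neg_mem h
  simpa using this

theorem aux_h2 (p : ℕ) : (3:ℤ) • lx2 p = (p:ℤ) • lx3 p := by
  have h : ((0:ℤ), (3:ℤ), -(p:ℤ)) ∈ Lrel p :=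
    AddSubgroup.subset_closure (Set.mem_insert_of_mem _ (Set.mem_singleton _))
  rw [lx2, lx3, ← QuotientAddGroup.mk_zsmul, ← QuotientAddGroup.mk_zsmul]
  refine (QuotientAddGroup.eq.2 ?_)
  have := neg_mem h
  simpa using this

theorem aux_m0 (p : ℕ) (y : Lgrp p) (u v c : ℤ)
    (h : y = (2*u) • lx1 p + (3*v) • lx2 p + c • lx3 p) : y ∈ Lpersistent p := by
  refine ⟨u*p+v*p+c, Or.inl ?_⟩
  linear_combination (norm := module) h + u • aux_h1 p + v • aux_h2 p

theorem aux_m1 (p : ℕ) (y : Lgrp p) (u v c : ℤ)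
    (h : y = (2*u) • lx1 p + (3*v+1) • lx2 p + c • lx3 p) : y ∈ Lpersistent p := by
  refine ⟨u*p+v*p+c, Or.inr ?_⟩
  linear_combination (norm := module) h + u • aux_h1 p + v • aux_h2 p

/-- For every integer `n`, at least one of the four elements `nω + ω`, `nω − x₁`,
`nω − x₂`, `nω − x₃` of `𝕃(2,3,p)` belongs to the persistent subset
`ℙ = ℤx₃ ∪ (x₂ + ℤx₃)`. -/
theorem stmt_15 (p : ℕ) (hp : 2 ≤ p) (n : ℤ) :
    n • lw p + lw p ∈ Lpersistent p ∨
    n • lw p - lx1 p ∈ Lpersistent p ∨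
    n • lw p - lx2 p ∈ Lpersistent p ∨
    n • lw p - lx3 p ∈ Lpersistent p := by
  obtain ⟨k, hk⟩ : ∃ k, n = 6*k ∨ n = 6*k+1 ∨ n = 6*k+2 ∨ n = 6*k+3 ∨ n = 6*k+4 ∨ n = 6*k+5 :=
    ⟨n / 6, by omega⟩
  rcases hk with rfl | rfl | rfl | rfl | rfl | rfl
  · exact Or.inr (Or.inr (Or.inr (aux_m0 p _ (-3*k) (-2*k) (6*k*(p-1)-1) (by
      unfold lw lc; module))))
  · exact Or.inl (aux_m1 p _ (-3*k-1) (-2*k-1) ((6*k+2)*(p-1)) (by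
      unfold lw lc; module))
  · exact Or.inr (Or.inr (Or.inr (aux_m1 p _ (-3*k-1) (-2*k-1) ((6*k+2)*(p-1)-1) (by
      unfold lw lc; module))))
  · exact Or.inr (Or.inl (aux_m0 p _ (-3*k-2) (-2*k-1) ((6*k+3)*(p-1)) (by
      unfold lw lc; module)))
  · exact Or.inr (Or.inr (Or.inl (aux_m1 p _ (-3*k-2) (-2*k-2) ((6*k+4)*(p-1)) (by
      unfold lw lc; module))))
  · exact Or.inr (Or.inl (aux_m1 p _ (-3*k-3) (-2*k-2) ((6*k+5)*(p-1)) (by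
      unfold lw lc; module)))
end

section
/- Let p ≥ 2. The only triples (a,b,e) of nonnegative integers satisfying a·x₁ + b·x₂ + e·x₃ = c in 𝕃(2,3,p) are (2,0,0), (0,3,0) and (0,0,p). (Equivalently, the monomials of degree c in the 𝕃-graded polynomial ring k[X₁,X₂,X₃] with deg Xᵢ = xᵢ are exactly X₁², X₂³ and X₃^p.) -/
/-- The only triples `(a,b,e)` of nonnegative integers with
`a·x₁ + b·x₂ + e·x₃ = c` in `𝕃(2,3,p)` are `(2,0,0)`, `(0,3,0)` and `(0,0,p)`. -/
theorem stmt_16 (p : ℕ) (hp : 2 ≤ p) (a b e : ℕ) :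
    a • lx1 p + b • lx2 p + e • lx3 p = lc p ↔
      (a = 2 ∧ b = 0 ∧ e = 0) ∨ (a = 0 ∧ b = 3 ∧ e = 0) ∨ (a = 0 ∧ b = 0 ∧ e = p) := by
  have key : a • lx1 p + b • lx2 p + e • lx3 p = lc p ↔
      ∃ m n : ℤ, 2 * m = -(a : ℤ) ∧ -3 * m + 3 * n = -(b : ℤ) ∧ -(n * p) = -(e : ℤ) + p := by
    have h1 : a • lx1 p + b • lx2 p + e • lx3 p
        = ((((a : ℤ), (b : ℤ), (e : ℤ)) : ℤ × ℤ × ℤ) : Lgrp p) := by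
      have : (((a : ℤ), (b : ℤ), (e : ℤ)) : ℤ × ℤ × ℤ)
          = a • (1, 0, 0) + b • (0, 1, 0) + e • (0, 0, 1) := by simp
      rw [this]; rfl
    have h2 : lc p = (((0, 0, (p : ℤ)) : ℤ × ℤ × ℤ) : Lgrp p) := by
      have : ((0, 0, (p : ℤ)) : ℤ × ℤ × ℤ) = (p : ℤ) • (0, 0, 1) := by simp
      rw [this]; rfl
    rw [h1, h2, QuotientAddGroup.eq, Lrel, AddSubgroup.mem_closure_pair]
    refine exists_congr fun m => exists_congr fun n => ?_
    simp only [Prod.smul_mk, Prod.mk_add_mk, Prod.neg_mk, Prod.mk.injEq, smul_eq_mul]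
    constructor
    · rintro ⟨h, h', h''⟩
      refine ⟨by linarith, by linarith, by linarith⟩
    · rintro ⟨h, h', h''⟩
      refine ⟨by linarith, by linarith, by linarith⟩
  rw [key]
  constructor
  · rintro ⟨m, n, h1, h2, h3⟩
    have hn0 : n ≤ 0 := by omega
    have hn1 : -1 ≤ n := by
      by_contra hlt
      have : n ≤ -2 := by omega
      have hp' : (2 : ℤ) ≤ p := by exact_mod_cast hp
      have he : (0 : ℤ) ≤ e := by positivity
      nlinarith
    obtain rfl | rfl : n = 0 ∨ n = -1 := by omega
    · right; right
      refine ⟨by omega, by omega, by omega⟩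
    · have : m = 0 ∨ m = -1 := by omega
      omega
  · rintro (⟨rfl, rfl, rfl⟩ | ⟨rfl, rfl, rfl⟩ | ⟨rfl, rfl, rfl⟩)
    · exact ⟨-1, -1, by simp⟩
    · exact ⟨0, -1, by simp⟩
    · exact ⟨0, 0, by simp⟩
end

section
/- Let p ≥ 7. The quotient group 𝕃(2,3,p)/ℤω is a finite cyclic group of order p−6, generated by the class of x₃. -/
def fz (p : ℕ) : (ℤ × ℤ × ℤ) →+ ZMod (p - 6) :=
  (Int.castAddHom (ZMod (p - 6))).comp
    { toFun := fun v => 3 * v.1 + 2 * v.2.1 + v.2.2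
      map_zero' := by simp
      map_add' := by intro a b; simp; ring }

lemma fz_apply (p : ℕ) (v : ℤ × ℤ × ℤ) :
    fz p v = ((3 * v.1 + 2 * v.2.1 + v.2.2 : ℤ) : ZMod (p - 6)) := rfl

lemma cast_p (p : ℕ) (hp : 7 ≤ p) : (p : ZMod (p - 6)) = 6 := by
  have h : ((p - 6 + 6 : ℕ) : ZMod (p - 6)) = 6 := by
    rw [Nat.cast_add, ZMod.natCast_self]; simp
  rwa [show p - 6 + 6 = p by omega] at h

def fL (p : ℕ) (hp : 7 ≤ p) : Lgrp p →+ ZMod (p - 6) :=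
  QuotientAddGroup.lift (Lrel p) (fz p) (by
    rw [Lrel, AddSubgroup.closure_le]
    rintro v (rfl | rfl)
    · simp [fz_apply]
    · simp [fz_apply, cast_p p hp])

lemma fL_mk (p : ℕ) (hp : 7 ≤ p) (v : ℤ × ℤ × ℤ) :
    fL p hp (QuotientAddGroup.mk v) = fz p v := rfl

def fQ (p : ℕ) (hp : 7 ≤ p) : (Lgrp p ⧸ AddSubgroup.zmultiples (lw p)) →+ ZMod (p - 6) :=
  QuotientAddGroup.lift _ (fL p hp) (by
    rw [AddSubgroup.zmultiples_le]
    simp [lw, lc, lx1, lx2, lx3, fL_mk, fz_apply, cast_p p hp, -QuotientAddGroup.mk_zsmul]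
    ring)

theorem gen (p : ℕ) (hp : 7 ≤ p) {G : Type*} [AddCommGroup G] (φ : ℤ × ℤ × ℤ →+ G)
    (hs : Function.Surjective φ) (q1 : φ (2, -3, 0) = 0) (q2 : φ (0, 3, -(p : ℤ)) = 0)
    (q3 : φ (-1, -1, (p : ℤ) - 1) = 0) (f : G →+ ZMod (p - 6)) (hf : f (φ (0, 0, 1)) = 1) :
    Nat.card G = p - 6 ∧ AddSubgroup.zmultiples (φ (0, 0, 1)) = ⊤ := by
  have e : ∀ i j k : ℤ, φ (i, j, k) = i • φ (1, 0, 0) + j • φ (0, 1, 0) + k • φ (0, 0, 1) := by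
    intro i j k
    rw [← map_zsmul, ← map_zsmul, ← map_zsmul, ← map_add, ← map_add]
    simp
  rw [e] at q1 q2 q3
  generalize φ (0, 0, 1) = C at *
  generalize φ (1, 0, 0) = A at *
  generalize φ (0, 1, 0) = B at *
  have h2 : B = (2 : ℤ) • C := by
    linear_combination (norm := module) q1 + (2 : ℤ) • q2 + (2 : ℤ) • q3
  have h1 : A = (3 : ℤ) • C := by
    linear_combination (norm := module) (2 : ℤ) • q1 + (3 : ℤ) • q2 + (3 : ℤ) • q3
  have h0 : ((p : ℤ) - 6) • C = 0 := by
    rw [h2] at q2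
    linear_combination (norm := module) (-1 : ℤ) • q2
  have top : AddSubgroup.zmultiples C = ⊤ := by
    rw [eq_top_iff]
    rintro x -
    obtain ⟨⟨i, j, k⟩, rfl⟩ := hs x
    refine ⟨3 * i + 2 * j + k, ?_⟩
    change (3 * i + 2 * j + k) • C = _
    rw [e, h1, h2]
    module
  refine ⟨?_, top⟩
  rw [← Nat.card_congr (AddSubgroup.topEquiv (G := G)).toEquiv, ← top, Nat.card_zmultiples]
  apply Nat.dvd_antisymm
  · rw [addOrderOf_dvd_iff_nsmul_eq_zero, ← natCast_zsmul, Nat.cast_sub (by omega)]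
    exact h0
  · have h := addOrderOf_map_dvd f C
    rwa [hf, ZMod.addOrderOf_one] at h

/-- For `p ≥ 7`, the quotient group `𝕃(2,3,p)/ℤω` is a finite cyclic group of
order `p − 6`, generated by the class of `x₃`. -/
theorem stmt_18 (p : ℕ) (hp : 7 ≤ p) :
    Nat.card (Lgrp p ⧸ AddSubgroup.zmultiples (lw p)) = p - 6 ∧
    AddSubgroup.zmultiples
      ((QuotientAddGroup.mk (lx3 p)) : Lgrp p ⧸ AddSubgroup.zmultiples (lw p)) = ⊤ := by
  have hr : ∀ v ∈ Lrel p, QuotientAddGroup.mk' (AddSubgroup.zmultiples (lw p))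
      (QuotientAddGroup.mk' (Lrel p) v) = 0 := by
    intro v hv
    rw [show QuotientAddGroup.mk' (Lrel p) v = 0 from (QuotientAddGroup.eq_zero_iff v).2 hv,
      map_zero]
  let inst : AddCommGroup (Lgrp p ⧸ AddSubgroup.zmultiples (lw p)) :=
    { QuotientAddGroup.Quotient.addGroup (AddSubgroup.zmultiples (lw p)) with
      add_comm := by
        intro a b
        obtain ⟨a, rfl⟩ := QuotientAddGroup.mk'_surjective _ a
        obtain ⟨b, rfl⟩ := QuotientAddGroup.mk'_surjective _ b
        obtain ⟨a, rfl⟩ := QuotientAddGroup.mk'_surjective _ a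
        obtain ⟨b, rfl⟩ := QuotientAddGroup.mk'_surjective _ b
        rw [← map_add, ← map_add, ← map_add, ← map_add, add_comm] }
  refine @gen p hp (Lgrp p ⧸ AddSubgroup.zmultiples (lw p)) inst ((QuotientAddGroup.mk' (AddSubgroup.zmultiples (lw p))).comp
    (QuotientAddGroup.mk' (Lrel p))) ?_ ?_ ?_ ?_ (fQ p hp) ?_
  · exact (QuotientAddGroup.mk'_surjective _).comp (QuotientAddGroup.mk'_surjective _)
  · exact hr _ (AddSubgroup.subset_closure (by simp))
  · exact hr _ (AddSubgroup.subset_closure (by simp))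
  · have e : QuotientAddGroup.mk' (Lrel p) (-1, -1, (p : ℤ) - 1) = lw p := by
      change _ = QuotientAddGroup.mk' (Lrel p)
        ((p : ℤ) • ((0, 0, 1) : ℤ × ℤ × ℤ) - (1, 0, 0) - (0, 1, 0) - (0, 0, 1))
      simp
    exact (QuotientAddGroup.eq_zero_iff _).2 (e ▸ AddSubgroup.mem_zmultiples (lw p))
  · change fz p (0, 0, 1) = 1
    simp [fz_apply]
end
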